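/- Let f(x,y) = ∑_{k,l≥0} c_{k,l} x^k y^l be the power series expansion of (1/(1-xy))·√((1+x)/(1-x))·√((1-y)/(1+y)). Then c_{k,l} = b(k)·b(l) if k ≡ l ≡ 0 (mod 2), c_{k,l} = 0 if k ≡ l ≡ 1 (mod 2), and c_{k,l} = 2·b(k)·b(l)/(k-l) otherwise, where b(k) = k! / (2^k · (⌊k/2⌋!)²). -/

import Mathlib

/-- `b(k) = k! / (2^k · (⌊k/2⌋!)²)`. -/
noncomputable def bcoef (k : ℕ) : ℝ :=
  (Nat.factorial k : ℝ) / (2 ^ k * ((Nat.factorial (k / 2) : ℝ)) ^ 2)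

/-- The coefficients `c_{k,l}`. -/
noncomputable def ccoef (k l : ℕ) : ℝ :=
  if k % 2 = 0 ∧ l % 2 = 0 then bcoef k * bcoef l
  else if k % 2 = 1 ∧ l % 2 = 1 then 0
  else 2 * bcoef k * bcoef l / ((k : ℝ) - (l : ℝ))

lemma HasSum.xcongr {ι : Type*} {f g : ι → ℝ} {a : ℝ} (h : HasSum f a)
    (hfg : ∀ i, g i = f i) : HasSum g a := by
  rwa [show g = f from funext hfg]

lemma g_rec (m : ℕ) : ((m : ℝ) + 1) * bcoef (2 * (m + 1)) = (m + 1 / 2) * bcoef (2 * m) := by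
  unfold bcoef
  have h1 : 2 * (m + 1) / 2 = m + 1 := by omega
  have h2 : 2 * m / 2 = m := by omega
  rw [h1, h2, show 2 * (m + 1) = 2 * m + 1 + 1 by ring]
  simp only [Nat.factorial_succ, pow_succ]
  push_cast
  have := Nat.factorial_ne_zero m
  field_simp
  ring

lemma b_odd (m : ℕ) : bcoef (2 * m + 1) = (2 * m + 1) / 2 * bcoef (2 * m) := by
  unfold bcoef
  have h1 : (2 * m + 1) / 2 = m := by omega
  have h2 : 2 * m / 2 = m := by omega
  rw [h1, h2]
  simp only [Nat.factorial_succ, pow_succ]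
  push_cast
  have := Nat.factorial_ne_zero m
  field_simp

lemma b_zero : bcoef 0 = 1 := by simp [bcoef]

lemma b_nonneg (k : ℕ) : 0 ≤ bcoef k := by unfold bcoef; positivity

lemma g_le (m : ℕ) : bcoef (2 * m) ≤ 1 := by
  induction m with
  | zero => simp [b_zero]
  | succ m ih =>
    have h := g_rec m
    have h0 := b_nonneg (2 * m)
    have hm : (0 : ℝ) ≤ m := by positivity
    by_contra! hc
    nlinarith

open Finset in
lemma conv (n : ℕ) : ∑ p ∈ antidiagonal n, bcoef (2 * p.1) * bcoef (2 * p.2) = 1 := by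
  have key : ∀ n : ℕ, ∑ p ∈ antidiagonal n, (p.1 : ℝ) * (bcoef (2 * p.1) * bcoef (2 * p.2)) =
      n / 2 * ∑ p ∈ antidiagonal n, bcoef (2 * p.1) * bcoef (2 * p.2) := by
    intro n
    have h1 : ∑ p ∈ antidiagonal n, (p.1 : ℝ) * (bcoef (2 * p.1) * bcoef (2 * p.2)) =
        ∑ p ∈ antidiagonal n, (p.2 : ℝ) * (bcoef (2 * p.1) * bcoef (2 * p.2)) := by
      rw [← Finset.Nat.sum_antidiagonal_swap]
      refine Finset.sum_congr rfl fun p _ => ?_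
      simp only [Prod.fst_swap, Prod.snd_swap]; ring
    have h2 : ∑ p ∈ antidiagonal n, (p.1 : ℝ) * (bcoef (2 * p.1) * bcoef (2 * p.2)) +
        ∑ p ∈ antidiagonal n, (p.2 : ℝ) * (bcoef (2 * p.1) * bcoef (2 * p.2)) =
        n * ∑ p ∈ antidiagonal n, bcoef (2 * p.1) * bcoef (2 * p.2) := by
      rw [← Finset.sum_add_distrib, Finset.mul_sum]
      refine Finset.sum_congr rfl fun p hp => ?_
      rw [Finset.HasAntidiagonal.mem_antidiagonal] at hp
      rw [← hp]; push_cast; ring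
    linarith
  induction n with
  | zero => simp [b_zero]
  | succ n ih =>
    have h := key (n + 1)
    rw [Finset.Nat.sum_antidiagonal_succ] at h
    have h3 : ∑ p ∈ antidiagonal n, (((p.1 + 1 : ℕ) : ℝ)) *
        (bcoef (2 * (p.1 + 1)) * bcoef (2 * p.2)) =
        ∑ p ∈ antidiagonal n, (p.1 : ℝ) * (bcoef (2 * p.1) * bcoef (2 * p.2)) +
        1 / 2 * ∑ p ∈ antidiagonal n, bcoef (2 * p.1) * bcoef (2 * p.2) := by
      rw [Finset.mul_sum, ← Finset.sum_add_distrib]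
      refine Finset.sum_congr rfl fun p hp => ?_
      have := g_rec p.1
      push_cast
      linear_combination bcoef (2 * p.2) * this
    simp only [] at h
    rw [h3, key n, ih] at h
    push_cast at h
    have hn : ((n : ℝ) + 1) ≠ 0 := by positivity
    field_simp at h
    apply mul_left_cancel₀ hn
    linarith

/-- coefficients of `√((1+x)/(1-x))` -/
noncomputable def acoef (k : ℕ) : ℝ := bcoef (2 * (k / 2))

lemma a_abs (k : ℕ) : |acoef k| ≤ 1 := by
  unfold acoef; rw [abs_of_nonneg (b_nonneg _)]; exact g_le _

lemma a_even (m : ℕ) : acoef (2 * m) = bcoef (2 * m) := by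
  unfold acoef; rw [show 2 * m / 2 = m by omega]

lemma a_odd (m : ℕ) : acoef (2 * m + 1) = bcoef (2 * m) := by
  unfold acoef; rw [show (2 * m + 1) / 2 = m by omega]

lemma c_ee (m n : ℕ) : ccoef (2 * m) (2 * n) = bcoef (2 * m) * bcoef (2 * n) := by
  simp [ccoef]

lemma c_oo (m n : ℕ) : ccoef (2 * m + 1) (2 * n + 1) = 0 := by
  have h : (2 * m + 1) % 2 = 1 := by omega
  have h' : (2 * n + 1) % 2 = 1 := by omega
  simp [ccoef, h, h']

lemma c_oe (m n : ℕ) : ccoef (2 * m + 1) (2 * n) =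
    (2 * m + 1) * bcoef (2 * m) * bcoef (2 * n) / (2 * m + 1 - 2 * n) := by
  have h : (2 * m + 1) % 2 = 1 := by omega
  simp only [ccoef, h, b_odd]
  simp
  ring

lemma c_eo (m n : ℕ) : ccoef (2 * m) (2 * n + 1) =
    (2 * n + 1) * bcoef (2 * m) * bcoef (2 * n) / (2 * m - (2 * n + 1)) := by
  have h : (2 * n + 1) % 2 = 1 := by omega
  simp only [ccoef, h, b_odd]
  simp
  ring

lemma odd_ne (m n : ℕ) : (2 * m + 1 - 2 * n : ℝ) ≠ 0 := by
  intro h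
  have h' : (2 * m + 1 : ℝ) = 2 * n := by linarith
  have : 2 * m + 1 = 2 * n := by exact_mod_cast h'
  omega

lemma c_rec (k l : ℕ) : ccoef (k + 1) (l + 1) - ccoef k l =
    acoef (k + 1) * ((-1) ^ (l + 1) * acoef (l + 1)) := by
  obtain ⟨m, rfl | rfl⟩ := Nat.even_or_odd' k <;> obtain ⟨n, rfl | rfl⟩ := Nat.even_or_odd' l
  · rw [c_oo, c_ee, a_odd, a_odd]
    simp [pow_add, pow_mul]
  · rw [show 2 * n + 1 + 1 = 2 * (n + 1) by ring, c_oe, c_eo, a_odd, a_even]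
    have h := g_rec n
    have h1 : (2 * m - (2 * n + 1) : ℝ) ≠ 0 := by
      intro h0; exact odd_ne n m (by linarith)
    have h2 : (2 * m + 1 - 2 * ((n + 1 : ℕ) : ℝ)) = (2 * m - (2 * n + 1) : ℝ) := by
      push_cast; ring
    rw [h2]
    simp only [pow_mul]
    field_simp
    push_cast
    norm_num
    linear_combination (2 * bcoef (2 * m)) * h
  · rw [show 2 * m + 1 + 1 = 2 * (m + 1) by ring, c_oe, c_eo, a_odd, a_even]
    have h := g_rec m
    have h1 : (2 * m + 1 - 2 * n : ℝ) ≠ 0 := odd_ne m n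
    have h2 : (2 * ((m + 1 : ℕ) : ℝ) - (2 * n + 1)) = (2 * m + 1 - 2 * n : ℝ) := by
      push_cast; ring
    rw [h2]
    simp only [pow_add, pow_mul]
    field_simp
    push_cast
    norm_num
    linear_combination (2 * bcoef (2 * n)) * h
  · rw [show 2 * n + 1 + 1 = 2 * (n + 1) by ring, show 2 * m + 1 + 1 = 2 * (m + 1) by ring,
      c_oo, c_ee, a_even, a_even]
    simp [pow_mul]

lemma c_k0 (k : ℕ) : ccoef k 0 = acoef k := by
  obtain ⟨m, rfl | rfl⟩ := Nat.even_or_odd' k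
  · have := c_ee m 0
    simpa [b_zero, a_even] using this
  · have h := c_oe m 0
    rw [mul_zero] at h
    rw [h, a_odd, b_zero]
    have : (2 * m + 1 : ℝ) ≠ 0 := by positivity
    simp
    field_simp

lemma c_0l (l : ℕ) : ccoef 0 l = (-1) ^ l * acoef l := by
  obtain ⟨m, rfl | rfl⟩ := Nat.even_or_odd' l
  · have := c_ee 0 m
    simpa [b_zero, a_even] using this
  · have h := c_eo 0 m
    rw [mul_zero] at h
    rw [h, a_odd, b_zero]
    have : (2 * m + 1 : ℝ) ≠ 0 := by positivity
    have h3 : ((2:ℝ) * (0 : ℕ) - (2 * m + 1)) = - (2 * m + 1) := by simp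
    rw [h3]
    simp only [pow_add, pow_mul]
    field_simp
    norm_num

lemma c_abs (k l : ℕ) : |ccoef k l| ≤ k + 1 := by
  induction k generalizing l with
  | zero =>
    rw [c_0l, abs_mul, abs_pow]
    simpa using a_abs l
  | succ k ih =>
    cases l with
    | zero =>
      rw [c_k0]
      have := a_abs (k + 1)
      push_cast
      have : (0 : ℝ) ≤ k := by positivity
      linarith
    | succ l =>
      have h : ccoef (k + 1) (l + 1) = ccoef k l +
        acoef (k + 1) * ((-1) ^ (l + 1) * acoef (l + 1)) := by linarith [c_rec k l]
      have h2 : |acoef (k + 1) * ((-1) ^ (l + 1) * acoef (l + 1))| ≤ 1 := by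
        rw [abs_mul, abs_mul, abs_pow]
        simp only [abs_neg, abs_one, one_pow, one_mul]
        exact mul_le_one₀ (a_abs _) (abs_nonneg _) (a_abs _)
      rw [h]
      push_cast
      linarith [abs_add_le (ccoef k l) (acoef (k + 1) * ((-1) ^ (l + 1) * acoef (l + 1))), ih l]

lemma a_summable {x : ℝ} (hx : |x| < 1) : Summable fun k => ‖acoef k * x ^ k‖ := by
  refine Summable.of_nonneg_of_le (fun _ => norm_nonneg _) (fun k => ?_)
    (summable_geometric_of_lt_one (abs_nonneg x) hx)
  rw [norm_mul, norm_pow, Real.norm_eq_abs, Real.norm_eq_abs]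
  exact mul_le_of_le_one_left (by positivity) (a_abs k)

lemma c_summable {x y : ℝ} (hx : |x| < 1) (hy : |y| < 1) :
    Summable fun p : ℕ × ℕ => ccoef p.1 p.2 * x ^ p.1 * y ^ p.2 := by
  have h1 : Summable fun k : ℕ => ((k : ℝ) + 1) * |x| ^ k := by
    have h := summable_pow_mul_geometric_of_norm_lt_one 1 (r := |x|) (by simpa using hx)
    have h' := h.add (summable_geometric_of_lt_one (abs_nonneg x) hx)
    refine h'.congr fun k => ?_
    ring
  have h2 := summable_geometric_of_lt_one (abs_nonneg y) hy
  have h3 := h1.mul_of_nonneg h2 (fun k => by positivity) (fun k => by positivity)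
  refine Summable.of_norm_bounded h3 fun p => ?_
  rw [norm_mul, norm_mul, norm_pow, norm_pow]
  simp only [Real.norm_eq_abs]
  gcongr
  exact c_abs _ _

lemma g_sum {t : ℝ} (ht : 0 ≤ t) (ht1 : t < 1) :
    HasSum (fun m => bcoef (2 * m) * t ^ m) (1 / √(1 - t)) := by
  have hs : Summable fun m => bcoef (2 * m) * t ^ m := by
    refine Summable.of_nonneg_of_le (fun m => mul_nonneg (b_nonneg _) (by positivity))
      (fun k => ?_) (summable_geometric_of_lt_one ht ht1)
    exact mul_le_of_le_one_left (by positivity) (g_le k)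
  have hn : Summable fun m => ‖bcoef (2 * m) * t ^ m‖ := hs.norm
  have h := tsum_mul_tsum_eq_tsum_sum_antidiagonal_of_summable_norm hn hn
  have h2 : (fun n => ∑ kl ∈ Finset.HasAntidiagonal.antidiagonal n, bcoef (2 * kl.1) * t ^ kl.1 *
      (bcoef (2 * kl.2) * t ^ kl.2)) = fun n => t ^ n := by
    funext n
    rw [← one_mul (t ^ n), ← conv n, Finset.sum_mul]
    refine Finset.sum_congr rfl fun p hp => ?_
    rw [Finset.HasAntidiagonal.mem_antidiagonal] at hp
    rw [← hp, pow_add]; ring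
  rw [h2, tsum_geometric_of_lt_one ht ht1] at h
  have h0 : 0 ≤ ∑' m, bcoef (2 * m) * t ^ m :=
    tsum_nonneg fun m => mul_nonneg (b_nonneg _) (by positivity)
  have h4 : ∑' m, bcoef (2 * m) * t ^ m = 1 / √(1 - t) := by
    rw [one_div, ← Real.sqrt_inv, ← h, Real.sqrt_mul_self h0]
  rw [← h4]
  exact hs.hasSum

lemma a_sum {x : ℝ} (hx : |x| < 1) :
    HasSum (fun k => acoef k * x ^ k) (√((1 + x) / (1 - x))) := by
  obtain ⟨hx1, hx2⟩ := abs_lt.mp hx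
  have h := g_sum (t := x ^ 2) (by positivity) (by nlinarith)
  have he : HasSum (fun m => acoef (2 * m) * x ^ (2 * m)) (1 / √(1 - x ^ 2)) := by
    refine h.xcongr fun m => ?_
    rw [a_even, pow_mul]
  have ho : HasSum (fun m => acoef (2 * m + 1) * x ^ (2 * m + 1)) (x * (1 / √(1 - x ^ 2))) := by
    refine (h.mul_left x).xcongr fun m => ?_
    rw [a_odd, pow_succ, pow_mul]; ring
  have := HasSum.even_add_odd (f := fun k => acoef k * x ^ k) he ho
  rw [show √((1 + x) / (1 - x)) = 1 / √(1 - x ^ 2) + x * (1 / √(1 - x ^ 2)) from ?_]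
  · exact this
  have e : 1 - x ^ 2 = (1 - x) * (1 + x) := by ring
  rw [e, Real.sqrt_mul (by linarith), Real.sqrt_div (by linarith)]
  have p1 : 0 < √(1 - x) := Real.sqrt_pos.mpr (by linarith)
  have p2 : 0 < √(1 + x) := Real.sqrt_pos.mpr (by linarith)
  field_simp
  rw [Real.sq_sqrt (by linarith)]

/-- The power series expansion of `(1/(1-xy))·√((1+x)/(1-x))·√((1-y)/(1+y))`
around `(0,0)` has coefficients `c_{k,l}`. -/
theorem stmt2 : ∃ r > (0 : ℝ), ∀ x y : ℝ, |x| < r → |y| < r →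
    (1 / (1 - x * y)) * Real.sqrt ((1 + x) / (1 - x)) * Real.sqrt ((1 - y) / (1 + y)) =
      ∑' p : ℕ × ℕ, ccoef p.1 p.2 * x ^ p.1 * y ^ p.2 := by
  refine ⟨1, one_pos, fun x y hx hy => ?_⟩
  have hA := a_sum hx
  have hy' : |-y| < 1 := by simpa using hy
  have hB := a_sum hy'
  have hAB := hA.mul hB (summable_mul_of_summable_norm (a_summable hx) (a_summable hy'))
  rw [sub_neg_eq_add, ← sub_eq_add_neg] at hAB
  have hC := (c_summable hx hy).hasSum
  set S := ∑' p : ℕ × ℕ, ccoef p.1 p.2 * x ^ p.1 * y ^ p.2 with hS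
  have hinj : Function.Injective (fun p : ℕ × ℕ => (p.1 + 1, p.2 + 1)) := by
    rintro ⟨a, b⟩ ⟨c, d⟩ h
    simpa using h
  let e : ℕ × ℕ → ℝ := fun p => ccoef p.1 p.2 * x ^ p.1 * y ^ p.2 -
    acoef p.1 * x ^ p.1 * (acoef p.2 * (-y) ^ p.2)
  have hE : HasSum e (S - √((1 + x) / (1 - x)) * √((1 - y) / (1 + y))) := hC.sub hAB
  have hE2 : HasSum e (x * y * S) := by
    rw [← hinj.hasSum_iff]
    · refine (hC.mul_left (x * y)).xcongr fun p => ?_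
      have := c_rec p.1 p.2
      simp only [Function.comp, e]
      rw [neg_pow y]
      linear_combination (x ^ (p.1 + 1) * y ^ (p.2 + 1)) * this
    · rintro ⟨k, l⟩ hp
      rcases k with _ | k
      · simp only [e]
        rw [c_0l, neg_pow y]
        have : acoef 0 = 1 := by simp [acoef, b_zero]
        rw [this]; ring
      rcases l with _ | l
      · simp only [e]
        rw [c_k0]
        have : acoef 0 = 1 := by simp [acoef, b_zero]
        rw [this]; ring
      · exact absurd ⟨(k, l), rfl⟩ hp
  have hfin := hE.unique hE2
  have hxy : 1 - x * y ≠ 0 := by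
    have : |x * y| < 1 := by
      rw [abs_mul]
      exact mul_lt_one_of_nonneg_of_lt_one_left (abs_nonneg _) hx hy.le
    have := (abs_lt.mp this).2
    intro h; linarith
  rw [mul_assoc, one_div, inv_mul_eq_iff_eq_mul₀ hxy]
  linarith
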